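/- For E > 0 and ρ ∈ Γ_-(E), the ω-limit set of ρ under the Hamiltonian flow (the set of limit points of Φ_t(ρ) as t → +∞) is nonempty, compact, invariant under the flow, and contained in the trapped set K(E). Symmetrically, for ρ ∈ Γ_+(E) the α-limit set (limit points as t → -∞) is nonempty, compact, invariant, and contained in K(E). -/

import Mathlib

open Filter Set
open scoped Topology RealInnerProductSpace

noncomputable section

/-- The phase space `ℝⁿ × ℝⁿ`. -/
abbrev Phase (n : ℕ) : Type := EuclideanSpace ℝ (Fin n) × EuclideanSpace ℝ (Fin n)

/-- The classical Hamiltonian `p(x, ξ) = ‖ξ‖² + V(x)`. -/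
def ham {n : ℕ} (V : EuclideanSpace ℝ (Fin n) → ℝ) (ρ : Phase n) : ℝ :=
  ‖ρ.2‖ ^ 2 + V ρ.1

/-- The Hamiltonian vector field `H_p(x, ξ) = (2ξ, -∇V(x))`. -/
def hamVF {n : ℕ} (V : EuclideanSpace ℝ (Fin n) → ℝ) (ρ : Phase n) : Phase n :=
  ((2 : ℝ) • ρ.2, -gradient V ρ.1)

/-- `Φ` is the (complete) flow of the Hamiltonian vector field `H_p`:
it starts at the identity, satisfies the group law, and each curve
`t ↦ Φ t ρ` is an integral curve of `H_p`. -/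
def IsHamFlow {n : ℕ} (V : EuclideanSpace ℝ (Fin n) → ℝ)
    (Φ : ℝ → Phase n → Phase n) : Prop :=
  (∀ ρ, Φ 0 ρ = ρ) ∧ (∀ s t ρ, Φ (s + t) ρ = Φ s (Φ t ρ)) ∧
    ∀ ρ t, HasDerivAt (fun s => Φ s ρ) (hamVF V (Φ t ρ)) t

/-- The outgoing tail `Γ₋(E)`: points of the energy surface whose forward
trajectory does not escape to infinity. -/
def GammaMinus {n : ℕ} (V : EuclideanSpace ℝ (Fin n) → ℝ)
    (Φ : ℝ → Phase n → Phase n) (E : ℝ) : Set (Phase n) :=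
  {ρ | ham V ρ = E ∧ ¬ Tendsto (fun t => ‖Φ t ρ‖) atTop atTop}

/-- The incoming tail `Γ₊(E)`: points of the energy surface whose backward
trajectory does not escape to infinity. -/
def GammaPlus {n : ℕ} (V : EuclideanSpace ℝ (Fin n) → ℝ)
    (Φ : ℝ → Phase n → Phase n) (E : ℝ) : Set (Phase n) :=
  {ρ | ham V ρ = E ∧ ¬ Tendsto (fun t => ‖Φ t ρ‖) atBot atTop}

/-- The trapped set `K(E) = Γ₋(E) ∩ Γ₊(E)`. -/
def trappedSet {n : ℕ} (V : EuclideanSpace ℝ (Fin n) → ℝ)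
    (Φ : ℝ → Phase n → Phase n) (E : ℝ) : Set (Phase n) :=
  GammaMinus V Φ E ∩ GammaPlus V Φ E

/-!
Once a trajectory sits outside a ball containing the support of `V` with velocity not pointing
inwards, the free ray starting there never meets the support, so by uniqueness the trajectory is
that ray: it escapes, or it is at rest. If this never happens, the velocity points inwards whenever
the trajectory is outside the ball, so its position is bounded, and its momentum is bounded by
conservation of energy. Hence a trajectory which does not escape is eventually bounded, in backward
time as well by reversing momenta. Its limit set is then nonempty, compact and invariant, and full
orbits inside this compact set do not escape in either direction.
-/

section OmegaLimit

variable {τ α β : Type*} [TopologicalSpace β] {f : Filter τ}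

theorem omegaLimit_subset_of_eventually_mapsTo {ϕ : τ → α → β} {s : Set α} {K : Set β}
    (hK : IsClosed K) (h : ∀ᶠ t in f, MapsTo (ϕ t) s K) : omegaLimit f ϕ s ⊆ K :=
  (omegaLimit_subset_closure_image2 f ϕ s h).trans
    (closure_minimal (image2_subset_iff.2 fun _ ht _ hx => ht hx) hK)

theorem isCompact_omegaLimit_of_eventually_mapsTo [T2Space β] {ϕ : τ → α → β} {s : Set α}
    {K : Set β} (hK : IsCompact K) (h : ∀ᶠ t in f, MapsTo (ϕ t) s K) :
    IsCompact (omegaLimit f ϕ s) :=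
  hK.of_isClosed_subset (isClosed_omegaLimit f ϕ s)
    (omegaLimit_subset_of_eventually_mapsTo hK.isClosed h)

theorem nonempty_omegaLimit_of_eventually_mapsTo [T2Space β] [f.NeBot] {ϕ : τ → α → β} {s : Set α}
    {K : Set β} (hK : IsCompact K) (h : ∀ᶠ t in f, MapsTo (ϕ t) s K) (hs : s.Nonempty) :
    (omegaLimit f ϕ s).Nonempty :=
  nonempty_omegaLimit_of_isCompact_absorbing f ϕ s hK
    ⟨_, h, closure_minimal (image2_subset_iff.2 fun _ ht _ hx => ht hx) hK.isClosed⟩ hs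

theorem mapsTo_omegaLimit_of_map_add [Add τ] {ϕ : τ → β → β}
    (hadd : ∀ s t x, ϕ (s + t) x = ϕ s (ϕ t x)) {t : τ} (hcont : Continuous (ϕ t))
    (ht : Tendsto (t + ·) f f) (s : Set β) :
    MapsTo (ϕ t) (omegaLimit f ϕ s) (omegaLimit f ϕ s) := by
  refine MapsTo.mono_right ?_ (omegaLimit_subset_of_tendsto ϕ s ht)
  exact mapsTo_omegaLimit s (mapsTo_id s) (fun _ _ => (hadd _ _ _).symm) hcont

theorem image_omegaLimit_eq_of_map_add [AddGroup τ] {ϕ : τ → β → β} (hzero : ∀ x, ϕ 0 x = x)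
    (hadd : ∀ s t x, ϕ (s + t) x = ϕ s (ϕ t x)) (hcont : ∀ t, Continuous (ϕ t))
    (hf : ∀ t, Tendsto (t + ·) f f) (s : Set β) (t : τ) :
    ϕ t '' omegaLimit f ϕ s = omegaLimit f ϕ s := by
  have hmaps (t : τ) := mapsTo_omegaLimit_of_map_add hadd (hcont t) (hf t) s
  refine (hmaps t).image_subset.antisymm fun x hx => ⟨ϕ (-t) x, hmaps (-t) hx, ?_⟩
  rw [← hadd, add_neg_cancel, hzero]

end OmegaLimit

section LipschitzFlow

variable {F : Type*} [NormedAddCommGroup F] [NormedSpace ℝ F] {v : F → F} {K : NNReal}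
  {Φ : ℝ → F → F}

theorem lipschitzWith_flow_of_nonneg (hv : LipschitzWith K v) (hzero : ∀ x, Φ 0 x = x)
    (hderiv : ∀ x t, HasDerivAt (Φ · x) (v (Φ t x)) t) {t : ℝ} (ht : 0 ≤ t) :
    LipschitzWith (Real.exp (K * t)).toNNReal (Φ t) := by
  have hcont (x : F) : Continuous (Φ · x) :=
    continuous_iff_continuousAt.2 fun s => (hderiv x s).continuousAt
  refine LipschitzWith.of_dist_le_mul fun x y => ?_
  have hgronwall : dist (Φ t x) (Φ t y) ≤ dist x y * Real.exp (K * (t - 0)) :=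
    dist_le_of_trajectories_ODE (v := fun _ => v) (fun _ => hv)
      (hcont x).continuousOn (fun s _ => (hderiv x s).hasDerivWithinAt)
      (hcont y).continuousOn (fun s _ => (hderiv y s).hasDerivWithinAt)
      (by simp only [hzero, le_refl]) t ⟨ht, le_rfl⟩
  rwa [sub_zero, mul_comm, ← Real.coe_toNNReal _ (Real.exp_pos _).le] at hgronwall

theorem continuous_flow_of_lipschitzWith (hv : LipschitzWith K v) (hzero : ∀ x, Φ 0 x = x)
    (hderiv : ∀ x t, HasDerivAt (Φ · x) (v (Φ t x)) t) (t : ℝ) : Continuous (Φ t) := by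
  rcases le_total 0 t with ht | ht
  · exact (lipschitzWith_flow_of_nonneg hv hzero hderiv ht).continuous
  · have hderiv_neg (x : F) (s : ℝ) : HasDerivAt (fun s => Φ (-s) x) (-v (Φ (-s) x)) s := by
      simpa [Function.comp_def] using (hderiv x (-s)).scomp s (hasDerivAt_neg s)
    simpa using (lipschitzWith_flow_of_nonneg (Φ := fun s => Φ (-s)) hv.neg (by simpa using hzero)
      hderiv_neg (neg_nonneg.2 ht)).continuous

end LipschitzFlow

section InnerProductSpace

variable {F : Type*} [NormedAddCommGroup F] [InnerProductSpace ℝ F]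

theorem norm_le_norm_add_smul_of_inner_nonneg {x v : F} (hxv : 0 ≤ ⟪x, v⟫) {t : ℝ} (ht : 0 ≤ t) :
    ‖x‖ ≤ ‖x + t • v‖ := by
  refine le_of_sq_le_sq ?_ (norm_nonneg _)
  rw [norm_add_sq_real, inner_smul_right]
  nlinarith [mul_nonneg ht hxv, sq_nonneg ‖t • v‖]

theorem norm_le_of_inner_deriv_neg {x x' : ℝ → F} (hx : ∀ t, HasDerivAt x (x' t) t) {r : ℝ}
    (hr : ‖x 0‖ ≤ r) (hinward : ∀ t, 0 ≤ t → ‖x t‖ = r → ⟪x t, x' t⟫ < 0) {t : ℝ} (ht : 0 ≤ t) :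
    ‖x t‖ ≤ r := by
  have hr_nonneg : 0 ≤ r := (norm_nonneg _).trans hr
  refine le_of_sq_le_sq ?_ hr_nonneg
  refine image_le_of_deriv_right_lt_deriv_boundary (f := fun s => ‖x s‖ ^ 2)
    (B := fun _ => r ^ 2) (fun s _ => (hx s).norm_sq.continuousAt.continuousWithinAt)
    (fun s _ => (hx s).norm_sq.hasDerivWithinAt) (by gcongr) (fun s => hasDerivAt_const s _)
    (fun s hs hsr => ?_) ⟨ht, le_rfl⟩
  have hsphere : ‖x s‖ = r := (sq_eq_sq₀ (norm_nonneg _) hr_nonneg).1 hsr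
  linarith [hinward s hs.1 hsphere]

theorem exists_lipschitzWith_gradient [CompleteSpace F] {V : F → ℝ} (hV : ContDiff ℝ 2 V)
    (hVsupp : HasCompactSupport V) : ∃ K, LipschitzWith K (gradient V) := by
  obtain ⟨K, hK⟩ := (hV.fderiv_right (m := 1) le_rfl).lipschitzWith_of_hasCompactSupport
    (hVsupp.fderiv ℝ) one_ne_zero
  exact ⟨_, (InnerProductSpace.toDual ℝ F).symm.lipschitz.comp hK⟩

theorem gradient_of_notMem_tsupport [CompleteSpace F] {V : F → ℝ} {x : F} (hx : x ∉ tsupport V) :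
    gradient V x = 0 := by
  rw [gradient, fderiv_of_notMem_tsupport ℝ hx, map_zero]

end InnerProductSpace

/-- The dichotomy for a curve `γ` along a filter `l` of times: either `‖γ‖` tends to infinity, or
`‖γ‖` is eventually bounded. It excludes curves oscillating between bounded and far regions. -/
def EscapesOrBounded {τ F : Type*} [Norm F] (l : Filter τ) (γ : τ → F) : Prop :=
  Tendsto (fun t => ‖γ t‖) l atTop ∨ IsBoundedUnder (· ≤ ·) l (fun t => ‖γ t‖)

theorem EscapesOrBounded.of_map_norm_eq {τ τ' F F' : Type*} [Norm F] [Norm F'] {l : Filter τ}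
    {l' : Filter τ'} {γ : τ → F} {γ' : τ' → F'} (hγ : EscapesOrBounded l γ)
    (h : map (fun t => ‖γ' t‖) l' = map (fun t => ‖γ t‖) l) : EscapesOrBounded l' γ' := by
  simpa only [EscapesOrBounded, Tendsto, IsBoundedUnder, h] using hγ

section HamiltonianFlow

variable {n : ℕ} {V : EuclideanSpace ℝ (Fin n) → ℝ} {K : NNReal} {Φ : ℝ → Phase n → Phase n}

theorem continuous_ham (hV : Continuous V) : Continuous (ham V) := by
  unfold ham
  fun_prop

theorem norm_snd_le_sqrt_ham_add {B : ℝ} (hB : ∀ x, -B ≤ V x) (ρ : Phase n) :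
    ‖ρ.2‖ ≤ √(ham V ρ + B) := by
  refine Real.le_sqrt_of_sq_le ?_
  rw [ham]
  linarith [hB ρ.1]

theorem lipschitzWith_hamVF (hgrad : LipschitzWith K (gradient V)) :
    LipschitzWith (max (‖(2 : ℝ)‖₊ * 1) (K * 1)) (hamVF V) :=
  ((lipschitzWith_smul (2 : ℝ)).comp LipschitzWith.prod_snd).prodMk
    (hgrad.comp LipschitzWith.prod_fst).neg

section FreeFlight

/-- The trajectory of the potential-free Hamiltonian `‖ξ‖²` starting at `ρ`. -/
def freeFlight (ρ : Phase n) (t : ℝ) : Phase n := (ρ.1 + (2 * t) • ρ.2, ρ.2)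

theorem hasDerivAt_freeFlight (ρ : Phase n) (t : ℝ) :
    HasDerivAt (freeFlight ρ) ((2 : ℝ) • ρ.2, 0) t := by
  have hpos : HasDerivAt (fun s : ℝ => ρ.1 + (2 * s) • ρ.2) ((2 : ℝ) • ρ.2) t := by
    simpa using (((hasDerivAt_id t).const_mul 2).smul_const ρ.2).const_add ρ.1
  exact hpos.prodMk (hasDerivAt_const t ρ.2)

theorem tendsto_norm_freeFlight_atTop {ρ : Phase n} (hρ : ρ.2 ≠ 0) :
    Tendsto (fun t => ‖freeFlight ρ t‖) atTop atTop := by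
  have hlinear : Tendsto (fun t : ℝ => 2 * ‖ρ.2‖ * t - ‖ρ.1‖) atTop atTop :=
    tendsto_atTop_add_const_right atTop _
      (tendsto_id.const_mul_atTop (mul_pos two_pos (norm_pos_iff.2 hρ)))
  refine tendsto_atTop_mono' atTop ?_ hlinear
  filter_upwards [eventually_ge_atTop 0] with t ht
  calc 2 * ‖ρ.2‖ * t - ‖ρ.1‖ = ‖(2 * t) • ρ.2‖ - ‖ρ.1‖ := by
        rw [norm_smul, Real.norm_of_nonneg (by positivity)]
        ring
    _ ≤ ‖ρ.1 + (2 * t) • ρ.2‖ := by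
        rw [add_comm]
        exact norm_sub_le_norm_add _ _
    _ ≤ ‖freeFlight ρ t‖ := norm_fst_le (freeFlight ρ t)

theorem escapesOrBounded_freeFlight (ρ : Phase n) : EscapesOrBounded atTop (freeFlight ρ) := by
  by_cases hρ : ρ.2 = 0
  · exact .inr (isBoundedUnder_of ⟨‖ρ‖, fun t => by simp [freeFlight, hρ, Prod.norm_def]⟩)
  · exact .inl (tendsto_norm_freeFlight_atTop hρ)

end FreeFlight

section TimeReversal

/-- The momentum reversal `(x, ξ) ↦ (x, -ξ)`, which conjugates a Hamiltonian flow to its inverse. -/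
def momentumFlip (ρ : Phase n) : Phase n := (ρ.1, -ρ.2)

theorem momentumFlip_momentumFlip (ρ : Phase n) : momentumFlip (momentumFlip ρ) = ρ := by
  simp [momentumFlip]

theorem norm_momentumFlip (ρ : Phase n) : ‖momentumFlip ρ‖ = ‖ρ‖ := by
  simp [momentumFlip, Prod.norm_def]

/-- The flow `Φ` run backwards in time and conjugated by momentum reversal, so that it is again a
flow of the same Hamiltonian. -/
def timeReversal (Φ : ℝ → Phase n → Phase n) (t : ℝ) (ρ : Phase n) : Phase n :=
  momentumFlip (Φ (-t) (momentumFlip ρ))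

theorem norm_timeReversal_momentumFlip (t : ℝ) (ρ : Phase n) :
    ‖timeReversal Φ t (momentumFlip ρ)‖ = ‖Φ (-t) ρ‖ := by
  rw [timeReversal, norm_momentumFlip, momentumFlip_momentumFlip]

end TimeReversal

namespace IsHamFlow

theorem hasDerivAt_fst (hΦ : IsHamFlow V Φ) (ρ : Phase n) (t : ℝ) :
    HasDerivAt (fun s => (Φ s ρ).1) ((2 : ℝ) • (Φ t ρ).2) t := by
  simpa [hamVF] using (hΦ.2.2 ρ t).hasFDerivAt.fst.hasDerivAt

theorem hasDerivAt_snd (hΦ : IsHamFlow V Φ) (ρ : Phase n) (t : ℝ) :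
    HasDerivAt (fun s => (Φ s ρ).2) (-gradient V (Φ t ρ).1) t := by
  simpa [hamVF] using (hΦ.2.2 ρ t).hasFDerivAt.snd.hasDerivAt

theorem ham_eq (hΦ : IsHamFlow V Φ) (hV : Differentiable ℝ V) (ρ : Phase n) (t : ℝ) :
    ham V (Φ t ρ) = ham V ρ := by
  have hderiv (s : ℝ) : HasDerivAt (fun s => ham V (Φ s ρ)) 0 s := by
    have hpot := (hV (Φ s ρ).1).hasGradientAt.hasFDerivAt.comp_hasDerivAt s (hΦ.hasDerivAt_fst ρ s)
    refine ((hΦ.hasDerivAt_snd ρ s).norm_sq.add hpot).congr_deriv ?_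
    simp only [InnerProductSpace.toDual_apply_apply, inner_neg_right, inner_smul_right]
    rw [real_inner_comm]
    ring
  simpa only [hΦ.1] using
    is_const_of_deriv_eq_zero (fun s => (hderiv s).differentiableAt) (fun s => (hderiv s).deriv) t 0

protected theorem continuous (hΦ : IsHamFlow V Φ) (hgrad : LipschitzWith K (gradient V)) (t : ℝ) :
    Continuous (Φ t) :=
  continuous_flow_of_lipschitzWith (lipschitzWith_hamVF hgrad) hΦ.1 hΦ.2.2 t

protected theorem timeReversal (hΦ : IsHamFlow V Φ) : IsHamFlow V (timeReversal Φ) := by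
  refine ⟨fun ρ => ?_, fun s t ρ => ?_, fun ρ t => ?_⟩
  · rw [timeReversal, neg_zero, hΦ.1, momentumFlip_momentumFlip]
  · simp only [timeReversal, momentumFlip_momentumFlip, neg_add, hΦ.2.1]
  · have hfst := (hΦ.hasDerivAt_fst (momentumFlip ρ) (-t)).scomp t (hasDerivAt_neg t)
    have hsnd := ((hΦ.hasDerivAt_snd (momentumFlip ρ) (-t)).scomp t (hasDerivAt_neg t)).neg
    refine (hfst.prodMk hsnd).congr_deriv ?_
    simp [hamVF, timeReversal, momentumFlip]

theorem eq_freeFlight (hΦ : IsHamFlow V Φ) (hgrad : LipschitzWith K (gradient V)) {ρ : Phase n}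
    (hray : ∀ t, 0 ≤ t → (freeFlight ρ t).1 ∉ tsupport V) {t : ℝ} (ht : 0 ≤ t) :
    Φ t ρ = freeFlight ρ t := by
  have hfree (s : ℝ) (hs : s ∈ Ico 0 t) :
      HasDerivWithinAt (freeFlight ρ) (hamVF V (freeFlight ρ s)) (Ici s) s := by
    rw [hamVF, gradient_of_notMem_tsupport (hray s hs.1), neg_zero]
    exact (hasDerivAt_freeFlight ρ s).hasDerivWithinAt
  exact ODE_solution_unique (v := fun _ => hamVF V) (fun _ => lipschitzWith_hamVF hgrad)
    (fun s _ => (hΦ.2.2 ρ s).continuousAt.continuousWithinAt)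
    (fun s _ => (hΦ.2.2 ρ s).hasDerivWithinAt)
    (fun s _ => (hasDerivAt_freeFlight ρ s).continuousAt.continuousWithinAt) hfree
    (by simp [hΦ.1, freeFlight]) ⟨ht, le_rfl⟩

theorem eq_freeFlight_of_outgoing (hΦ : IsHamFlow V Φ) (hgrad : LipschitzWith K (gradient V))
    {R : ℝ} (hR : ∀ x ∈ tsupport V, ‖x‖ ≤ R) {ρ : Phase n} (hfar : R < ‖ρ.1‖)
    (hout : 0 ≤ ⟪ρ.1, ρ.2⟫) {t : ℝ} (ht : 0 ≤ t) : Φ t ρ = freeFlight ρ t := by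
  refine hΦ.eq_freeFlight hgrad (fun s hs hmem => ?_) ht
  have hgrow : ‖ρ.1‖ ≤ ‖(freeFlight ρ s).1‖ :=
    norm_le_norm_add_smul_of_inner_nonneg hout (by positivity)
  exact (hfar.trans_le hgrow).not_ge (hR _ hmem)

theorem map_norm_atTop_apply (hΦ : IsHamFlow V Φ) (ρ : Phase n) (s : ℝ) :
    map (fun t => ‖Φ t (Φ s ρ)‖) atTop = map (fun t => ‖Φ t ρ‖) atTop := by
  conv_rhs => rw [← (OrderIso.addRight s).map_atTop, map_map]
  simp only [Function.comp_def, OrderIso.addRight_apply, hΦ.2.1]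

theorem norm_fst_le_of_incoming (hΦ : IsHamFlow V Φ) {R : ℝ} {ρ : Phase n}
    (hin : ∀ t, 0 ≤ t → R < ‖(Φ t ρ).1‖ → ⟪(Φ t ρ).1, (Φ t ρ).2⟫ < 0) {t : ℝ} (ht : 0 ≤ t) :
    ‖(Φ t ρ).1‖ ≤ max ‖ρ.1‖ (R + 1) := by
  refine norm_le_of_inner_deriv_neg (hΦ.hasDerivAt_fst ρ) (by simp [hΦ.1]) (fun s hs hsr => ?_) ht
  rw [inner_smul_right]
  have hfar : R < ‖(Φ s ρ).1‖ := (lt_add_one R).trans_le (hsr ▸ le_max_right _ _)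
  linarith [hin s hs hfar]

theorem isBoundedUnder_norm_of_incoming (hΦ : IsHamFlow V Φ) (hV : Differentiable ℝ V)
    {B : ℝ} (hB : ∀ x, -B ≤ V x) {R : ℝ} {ρ : Phase n}
    (hin : ∀ t, 0 ≤ t → R < ‖(Φ t ρ).1‖ → ⟪(Φ t ρ).1, (Φ t ρ).2⟫ < 0) :
    IsBoundedUnder (· ≤ ·) atTop (fun t => ‖Φ t ρ‖) := by
  refine isBoundedUnder_of_eventually_le (a := max (max ‖ρ.1‖ (R + 1)) √(ham V ρ + B)) ?_
  filter_upwards [eventually_ge_atTop 0] with t ht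
  refine max_le_max (hΦ.norm_fst_le_of_incoming hin ht) ?_
  simpa only [hΦ.ham_eq hV] using norm_snd_le_sqrt_ham_add hB (Φ t ρ)

theorem escapesOrBounded_atTop (hΦ : IsHamFlow V Φ) (hV : Differentiable ℝ V)
    (hgrad : LipschitzWith K (gradient V)) (hVsupp : HasCompactSupport V) (ρ : Phase n) :
    EscapesOrBounded atTop (fun t => Φ t ρ) := by
  obtain ⟨B, hB⟩ := hVsupp.exists_bound_of_continuous hV.continuous
  obtain ⟨R, hR⟩ := hVsupp.isCompact.isBounded.exists_norm_le
  by_cases hout : ∃ s, 0 ≤ s ∧ R < ‖(Φ s ρ).1‖ ∧ 0 ≤ ⟪(Φ s ρ).1, (Φ s ρ).2⟫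
  · obtain ⟨s, -, hfar, hout⟩ := hout
    refine (escapesOrBounded_freeFlight (Φ s ρ)).of_map_norm_eq ?_
    rw [← hΦ.map_norm_atTop_apply ρ s]
    refine Filter.map_congr ?_
    filter_upwards [eventually_ge_atTop 0] with t ht
    rw [hΦ.eq_freeFlight_of_outgoing hgrad hR hfar hout ht]
  · push Not at hout
    exact .inr (hΦ.isBoundedUnder_norm_of_incoming hV (fun x => (abs_le.1 (hB x)).1) hout)

theorem escapesOrBounded_atBot (hΦ : IsHamFlow V Φ) (hV : Differentiable ℝ V)
    (hgrad : LipschitzWith K (gradient V)) (hVsupp : HasCompactSupport V) (ρ : Phase n) :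
    EscapesOrBounded atBot (fun t => Φ t ρ) := by
  refine (hΦ.timeReversal.escapesOrBounded_atTop hV hgrad hVsupp (momentumFlip ρ)).of_map_norm_eq ?_
  simp only [norm_timeReversal_momentumFlip]
  rw [← map_neg_atTop, map_map]
  rfl

theorem omegaLimit_subset_trappedSet (hΦ : IsHamFlow V Φ) (hV : Differentiable ℝ V)
    (hgrad : LipschitzWith K (gradient V)) {f : Filter ℝ} (hf : ∀ t : ℝ, Tendsto (t + ·) f f)
    {ρ : Phase n} {C : ℝ} (hC : ∀ᶠ t in f, MapsTo (Φ t) {ρ} (Metric.closedBall 0 C)) :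
    omegaLimit f Φ {ρ} ⊆ trappedSet V Φ (ham V ρ) := by
  intro σ hσ
  have hconserved (t : ℝ) : MapsTo (Φ t) {ρ} (ham V ⁻¹' {ham V ρ}) :=
    mapsTo_singleton.2 (hΦ.ham_eq hV ρ t)
  have henergy : ham V σ = ham V ρ :=
    omegaLimit_subset_of_eventually_mapsTo
      (isClosed_singleton.preimage (continuous_ham hV.continuous)) (.of_forall hconserved) hσ
  have hbdd (t : ℝ) : ‖Φ t σ‖ ≤ C := mem_closedBall_zero_iff.1 <|
    omegaLimit_subset_of_eventually_mapsTo Metric.isClosed_closedBall hC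
      (mapsTo_omegaLimit_of_map_add hΦ.2.1 (hΦ.continuous hgrad t) (hf t) {ρ} hσ)
  exact ⟨⟨henergy, fun h => not_isBoundedUnder_of_tendsto_atTop h (isBoundedUnder_of ⟨C, hbdd⟩)⟩,
    ⟨henergy, fun h => not_isBoundedUnder_of_tendsto_atTop h (isBoundedUnder_of ⟨C, hbdd⟩)⟩⟩

theorem omegaLimit_of_isBoundedUnder (hΦ : IsHamFlow V Φ) (hV : Differentiable ℝ V)
    (hgrad : LipschitzWith K (gradient V)) {f : Filter ℝ} [f.NeBot]
    (hf : ∀ t : ℝ, Tendsto (t + ·) f f) {ρ : Phase n}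
    (hρ : IsBoundedUnder (· ≤ ·) f (fun t => ‖Φ t ρ‖)) :
    (omegaLimit f Φ {ρ}).Nonempty ∧
      IsCompact (omegaLimit f Φ {ρ}) ∧
        (∀ t : ℝ, Φ t '' omegaLimit f Φ {ρ} = omegaLimit f Φ {ρ}) ∧
          omegaLimit f Φ {ρ} ⊆ trappedSet V Φ (ham V ρ) := by
  obtain ⟨C, hC⟩ := hρ
  have hball : ∀ᶠ t in f, MapsTo (Φ t) {ρ} (Metric.closedBall 0 C) := by
    filter_upwards [eventually_map.1 hC] with t ht
    simpa using ht
  have hcompact := isCompact_closedBall (0 : Phase n) C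
  exact ⟨nonempty_omegaLimit_of_eventually_mapsTo hcompact hball (singleton_nonempty ρ),
    isCompact_omegaLimit_of_eventually_mapsTo hcompact hball,
    image_omegaLimit_eq_of_map_add hΦ.1 hΦ.2.1 (hΦ.continuous hgrad) hf {ρ},
    hΦ.omegaLimit_subset_trappedSet hV hgrad hf hball⟩

end IsHamFlow

theorem limit_sets_in_trappedSet_general (hV : Differentiable ℝ V)
    (hgrad : LipschitzWith K (gradient V)) (hVsupp : HasCompactSupport V) (hΦ : IsHamFlow V Φ)
    (E : ℝ) :
    (∀ ρ ∈ GammaMinus V Φ E,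
        (omegaLimit atTop Φ {ρ}).Nonempty ∧
          IsCompact (omegaLimit atTop Φ {ρ}) ∧
            (∀ t : ℝ, Φ t '' omegaLimit atTop Φ {ρ} = omegaLimit atTop Φ {ρ}) ∧
              omegaLimit atTop Φ {ρ} ⊆ trappedSet V Φ E) ∧
      ∀ ρ ∈ GammaPlus V Φ E,
        (omegaLimit atBot Φ {ρ}).Nonempty ∧
          IsCompact (omegaLimit atBot Φ {ρ}) ∧
            (∀ t : ℝ, Φ t '' omegaLimit atBot Φ {ρ} = omegaLimit atBot Φ {ρ}) ∧
              omegaLimit atBot Φ {ρ} ⊆ trappedSet V Φ E := by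
  constructor
  · rintro ρ ⟨rfl, hρ⟩
    exact hΦ.omegaLimit_of_isBoundedUnder hV hgrad
      (fun t => tendsto_atTop_add_const_left _ t tendsto_id)
      ((hΦ.escapesOrBounded_atTop hV hgrad hVsupp ρ).resolve_left hρ)
  · rintro ρ ⟨rfl, hρ⟩
    exact hΦ.omegaLimit_of_isBoundedUnder hV hgrad
      (fun t => tendsto_atBot_add_const_left _ t tendsto_id)
      ((hΦ.escapesOrBounded_atBot hV hgrad hVsupp ρ).resolve_left hρ)

end HamiltonianFlow

/-- The ω-limit set of a forward-trapped point is nonempty, compact, flow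
invariant and contained in the trapped set; symmetrically for the α-limit set
of a backward-trapped point. -/
theorem limit_sets_in_trappedSet (n : ℕ) (hn : 1 ≤ n)
    (V : EuclideanSpace ℝ (Fin n) → ℝ) (hV : ContDiff ℝ (⊤ : ℕ∞) V)
    (hVsupp : HasCompactSupport V)
    (Φ : ℝ → Phase n → Phase n) (hΦ : IsHamFlow V Φ)
    (E : ℝ) (hE : 0 < E) :
    (∀ ρ ∈ GammaMinus V Φ E,
        (omegaLimit atTop Φ {ρ}).Nonempty ∧
          IsCompact (omegaLimit atTop Φ {ρ}) ∧
            (∀ t : ℝ, Φ t '' omegaLimit atTop Φ {ρ} = omegaLimit atTop Φ {ρ}) ∧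
              omegaLimit atTop Φ {ρ} ⊆ trappedSet V Φ E) ∧
      ∀ ρ ∈ GammaPlus V Φ E,
        (omegaLimit atBot Φ {ρ}).Nonempty ∧
          IsCompact (omegaLimit atBot Φ {ρ}) ∧
            (∀ t : ℝ, Φ t '' omegaLimit atBot Φ {ρ} = omegaLimit atBot Φ {ρ}) ∧
              omegaLimit atBot Φ {ρ} ⊆ trappedSet V Φ E := by
  obtain ⟨K, hgrad⟩ := exists_lipschitzWith_gradient (hV.of_le (WithTop.coe_le_coe.2 le_top)) hVsupp
  exact limit_sets_in_trappedSet_general (hV.differentiable (by simp)) hgrad hVsupp hΦ E
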